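/- Let n be a finite-dimensional nilpotent Lie algebra over a field F of characteristic zero with nilindex p ≥ 4. Suppose there exists a derivation D of n such that D(n^2) ⊆ Z(n) and D does not vanish identically on n^2. Then n admits a local automorphism which is not an automorphism. -/

import Mathlib

/-!
The Jordan-Chevalley parts `S` and `N` of `D` are derivations. Both map `n²` into the center: modulo
an invariant subspace containing `D x`, any polynomial in `D` acts on `x` as its constant term, so
nilpotency of `D - S` forces the constant term of `S` to act as zero. One of them does not vanish on
`n²`, and some polynomial `P` in it, with constant term `1`, is an automorphism `φ ≠ 1` on `n²`. For
`N` this is the exponential. For `S` one needs a nontrivial rational point of a torus: the values of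
`P` at the eigenvalues have to be nonzero, Galois equivariant and multiplicative along sums of
eigenvalues, such as `a ↦ ∏ σ, σ k ^ g (σ⁻¹ a)` with `g` additive and integer valued.

Since `P` has constant term `1`, `φ - 1` maps `n²` into the center. Let `T = 1 + (φ - 1) ∘ π` with
`π` a projection onto `n²`. On `n²` it agrees with `φ`; at `x ∉ n²` it adds to `x` an element of
`n² ∩ Z(n)`, which a central transvection also does. Were `T` multiplicative, it would fix all
brackets, because `T - 1` is central-valued, and so `φ` would be trivial on `n²`.
-/

open Polynomial TensorProduct Pointwise

section Endomorphism

variable {R M : Type*} [CommRing R] [AddCommGroup M] [Module R M]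
  {f : Module.End R M} {Q : Submodule R M}

theorem aeval_mem_of_mem_invtSubmodule (hQ : Q ∈ f.invtSubmodule) (p : R[X]) {x : M}
    (hx : x ∈ Q) : aeval f p x ∈ Q := by
  induction p using Polynomial.induction_on' with
  | add p q hp hq => simpa only [map_add, LinearMap.add_apply] using Q.add_mem hp hq
  | monomial n a =>
    rw [aeval_monomial, Module.End.mul_apply, Module.algebraMap_end_apply, Module.End.coe_pow]
    exact Q.smul_mem a (Set.MapsTo.iterate hQ n hx)

theorem aeval_sub_coeff_zero_smul_mem (hQ : Q ∈ f.invtSubmodule) (p : R[X]) {x : M}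
    (hx : f x ∈ Q) : aeval f p x - p.coeff 0 • x ∈ Q := by
  have h : aeval f p x = aeval f p.divX (f x) + p.coeff 0 • x := by
    conv_lhs => rw [← divX_mul_X_add p]
    simp
  rw [h, add_sub_cancel_right]
  exact aeval_mem_of_mem_invtSubmodule hQ _ hx

theorem aeval_restrict_apply (hQ : Q ∈ f.invtSubmodule) (p : R[X]) (x : Q) :
    (aeval (f.restrict hQ) p x : M) = aeval f p x := by
  induction p using Polynomial.induction_on' with
  | add p q hp hq => simp [hp, hq]
  | monomial n a =>
    have hpow : f.restrict hQ ^ n = (f ^ n).restrict fun x hx => by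
        rw [Module.End.coe_pow]; exact Set.MapsTo.iterate hQ n hx :=
      Module.End.pow_restrict n _
    simp [aeval_monomial, hpow]

theorem mem_maxGenEigenspace_of_apply_sub_smul_mem {a : R} {x : M}
    (hx : f x - a • x ∈ f.maxGenEigenspace a) : x ∈ f.maxGenEigenspace a := by
  obtain ⟨k, hk⟩ := (f.mem_maxGenEigenspace a _).1 hx
  refine (f.mem_maxGenEigenspace a x).2 ⟨k + 1, ?_⟩
  simpa [pow_succ] using hk

theorem aeval_mem_of_isNilpotent_sub_aeval {F V : Type*} [Field F] [AddCommGroup V] [Module F V]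
    {f : Module.End F V} {Q : Submodule F V} (hQ : Q ∈ f.invtSubmodule) {p : F[X]}
    (hp : IsNilpotent (f - aeval f p)) {x : V} (hx : f x ∈ Q) : aeval f p x ∈ Q := by
  obtain ⟨k, hk⟩ := hp
  -- Modulo `Q`, the zero operator `(f - p(f)) ^ k` acts on `x` as `(-p(0)) ^ k`.
  have hX : aeval f ((X - p) ^ k) = 0 := by rw [map_pow, map_sub, aeval_X, hk]
  have hcoeff : (-p.coeff 0) ^ k • x ∈ Q := by
    have := aeval_sub_coeff_zero_smul_mem hQ ((X - p) ^ k) hx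
    simpa [hX, coeff_zero_eq_eval_zero] using this
  have hsmul : p.coeff 0 • x ∈ Q := by
    by_cases h0 : p.coeff 0 = 0
    · simp [h0]
    · exact Q.smul_mem _ ((Q.smul_mem_iff (pow_ne_zero k (neg_ne_zero.2 h0))).1 hcoeff)
  simpa using Q.add_mem (aeval_sub_coeff_zero_smul_mem hQ p hx) hsmul

theorem exists_mem_apply_ne_zero_apply_apply_eq_zero {R M : Type*} [Semiring R]
    [AddCommMonoid M] [Module R M] {f : Module.End R M} {W : Submodule R M} (hf : IsNilpotent f)
    (hW : W ∈ f.invtSubmodule) (hne : ∃ w ∈ W, f w ≠ 0) : ∃ w ∈ W, f w ≠ 0 ∧ f (f w) = 0 := by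
  obtain ⟨k, hk⟩ := hf
  by_contra! hc
  obtain ⟨w, hw, hfw⟩ := hne
  have h (j : ℕ) : (f ^ j) w ∈ W ∧ f ((f ^ j) w) ≠ 0 := by
    induction j with
    | zero => exact ⟨hw, hfw⟩
    | succ j ih =>
      rw [pow_succ', Module.End.mul_apply]
      exact ⟨hW ih.1, hc _ ih.1 ih.2⟩
  exact (h k).2 (by rw [hk, LinearMap.zero_apply, map_zero])

theorem isUnit_aeval_of_isCoprime_minpoly {R A : Type*} [CommRing R] [Ring A] [Algebra R A] {a : A}
    {p : R[X]} (h : IsCoprime (minpoly R a) p) : IsUnit (aeval a p) := by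
  obtain ⟨u, v, huv⟩ := h
  have hinv : aeval a (v * p) = 1 := by
    have := congrArg (aeval a) huv
    rwa [map_add, map_mul, minpoly.aeval, mul_zero, zero_add, map_one] at this
  exact ⟨⟨aeval a p, aeval a v, by rw [← map_mul, mul_comm, hinv], by rw [← map_mul, hinv]⟩, rfl⟩

theorem minpoly_restrict_dvd {F V : Type*} [Field F] [AddCommGroup V] [Module F V]
    {f : Module.End F V} {W : Submodule F V} (hW : W ∈ f.invtSubmodule) :
    minpoly F (f.restrict hW) ∣ minpoly F f :=
  minpoly.dvd F _ (LinearMap.ext fun w => Subtype.ext (by simp [aeval_restrict_apply]))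

theorem bilin_ext_of_iSup_eq_top {R M N P : Type*} [CommSemiring R] [AddCommMonoid M]
    [AddCommMonoid N] [AddCommMonoid P] [Module R M] [Module R N] [Module R P] {ι κ : Type*}
    {p : ι → Submodule R M} {q : κ → Submodule R N} (hp : ⨆ i, p i = ⊤) (hq : ⨆ j, q j = ⊤)
    {B C : M →ₗ[R] N →ₗ[R] P} (h : ∀ i, ∀ x ∈ p i, ∀ j, ∀ y ∈ q j, B x y = C x y) : B = C := by
  have hle : ⊤ ≤ LinearMap.eqLocus B C := by
    rw [← hp, iSup_le_iff]
    intro i x hx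
    have : ⊤ ≤ LinearMap.eqLocus (B x) (C x) := by
      rw [← hq, iSup_le_iff]
      exact fun j y hy => h i x hx j y hy
    exact LinearMap.ext fun y => this (Submodule.mem_top)
  exact LinearMap.ext fun x => hle Submodule.mem_top

end Endomorphism

section BaseChange

theorem baseChange_aeval {R M : Type*} [CommRing R] [AddCommGroup M] [Module R M] (A : Type*)
    [CommRing A] [Algebra R A] (f : Module.End R M) (p : R[X]) :
    (aeval f p).baseChange A = aeval (f.baseChange A) (p.map (algebraMap R A)) := by
  rw [aeval_map_algebraMap]
  exact (aeval_algHom_apply (Module.End.baseChangeHom R A M) f p).symm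

variable {F V : Type*} [Field F] [AddCommGroup V] [Module F V] (K : Type*) [Field K] [Algebra F K]

theorem isSemisimple_baseChange [PerfectField F] [FiniteDimensional F V] {f : Module.End F V}
    (hf : f.IsSemisimple) : Module.End.IsSemisimple (f.baseChange K) := by
  refine Module.End.isSemisimple_of_squarefree_aeval_eq_zero
    (p := (minpoly F f).map (algebraMap F K)) ?_ ?_
  · exact (PerfectField.separable_iff_squarefree.2 hf.minpoly_squarefree).map.squarefree
  · rw [← baseChange_aeval, minpoly.aeval, LinearMap.baseChange_zero]

variable {K} {f : Module.End F V}

theorem aeval_minpoly_eq_zero_of_hasEigenvalue_baseChange {a : K}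
    (ha : Module.End.HasEigenvalue (f.baseChange K) a) : aeval a (minpoly F f) = 0 := by
  have hdvd : minpoly K (f.baseChange K) ∣ (minpoly F f).map (algebraMap F K) :=
    minpoly.dvd K _ (by rw [← baseChange_aeval, minpoly.aeval, LinearMap.baseChange_zero])
  rw [← eval_map_algebraMap]
  exact (Module.End.isRoot_of_hasEigenvalue ha).dvd hdvd

variable (K) in
theorem exists_ne_zero_aeval_minpoly_eq_zero [FiniteDimensional F V] [PerfectField F]
    [IsAlgClosed K] (hf : f.IsSemisimple) (hne : f ≠ 0) :
    ∃ a : K, a ≠ 0 ∧ aeval a (minpoly F f) = 0 := by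
  by_contra! hc
  have hK : f.baseChange K = 0 := by
    refine (isSemisimple_baseChange K hf).eq_zero_iff_forall_eigenvalue.2 fun a ha => ?_
    by_contra ha0
    exact hc a ha0 (aeval_minpoly_eq_zero_of_hasEigenvalue_baseChange ha)
  refine hne (LinearMap.ext fun v => Module.Flat.tensorProduct_mk_injective (R := F) (M := V) K ?_)
  simpa using LinearMap.congr_fun hK (1 ⊗ₜ v)

end BaseChange

section LieDerivation

variable {R L : Type*} [CommRing R] [LieRing L] [LieAlgebra R L] (D : LieDerivation R L L)

theorem lie_mem_maxGenEigenspace_add {a b : R} {x y : L}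
    (hx : x ∈ Module.End.maxGenEigenspace D.toLinearMap a)
    (hy : y ∈ Module.End.maxGenEigenspace D.toLinearMap b) :
    ⁅x, y⁆ ∈ Module.End.maxGenEigenspace D.toLinearMap (a + b) := by
  rw [Module.End.mem_maxGenEigenspace] at hx hy
  obtain ⟨i, hi⟩ := hx
  obtain ⟨j, hj⟩ := hy
  induction i generalizing x y j with
  | zero =>
    rw [pow_zero, Module.End.one_apply] at hi
    simp [hi]
  | succ i ihi =>
    induction j generalizing y with
    | zero =>
      rw [pow_zero, Module.End.one_apply] at hj
      simp [hj]
    | succ j ihj =>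
      have leibniz : D ⁅x, y⁆ - (a + b) • ⁅x, y⁆ = ⁅D x - a • x, y⁆ + ⁅x, D y - b • y⁆ := by
        simp only [D.apply_lie_eq_add, add_smul, sub_lie, lie_sub, smul_lie, lie_smul]
        abel
      refine mem_maxGenEigenspace_of_apply_sub_smul_mem ?_
      rw [LieDerivation.coeFn_coe, leibniz]
      exact add_mem (ihi (by simpa [pow_succ] using hi) _ hj) (ihj (by simpa [pow_succ] using hj))

theorem center_mem_invtSubmodule :
    (LieAlgebra.center R L).toSubmodule ∈ Module.End.invtSubmodule D.toLinearMap := by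
  intro z hz
  refine (LieModule.mem_maxTrivSubmodule R L L _).2 fun x => ?_
  have hz' := (LieModule.mem_maxTrivSubmodule R L L z).1 hz
  simpa [hz'] using (D.apply_lie_eq_add x z).symm

end LieDerivation

section BaseChangeDerivation

variable {F L : Type*} (K : Type*) [CommRing F] [CommRing K] [Algebra F K] [LieRing L]
  [LieAlgebra F L]

/-- The extension of a derivation of `L` to a `K`-linear derivation of `K ⊗[F] L`;
`Lie.Derivation.ofLieDerivation` provides it as an `F`-linear derivation only. -/
noncomputable def baseChangeDerivation (D : LieDerivation F L L) :
    LieDerivation K (K ⊗[F] L) (K ⊗[F] L) where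
  toLinearMap := D.toLinearMap.baseChange K
  leibniz' := (Lie.Derivation.ofLieDerivation K D).leibniz'

end BaseChangeDerivation

section JordanChevalley

variable {F L : Type*} [Field F] [LieRing L] [LieAlgebra F L]

theorem apply_lie_of_baseChange_apply_eq_smul {K : Type*} [Field K] [Algebra F K]
    (D : LieDerivation F L L) (S : Module.End F L)
    (htop : ⨆ a, Module.End.maxGenEigenspace (baseChangeDerivation K D).toLinearMap a = ⊤)
    (hS : ∀ a, ∀ x ∈ Module.End.maxGenEigenspace (baseChangeDerivation K D).toLinearMap a,
      S.baseChange K x = a • x) (x y : L) :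
    S ⁅x, y⁆ = ⁅x, S y⁆ + ⁅S x, y⁆ := by
  let B : (K ⊗[F] L) →ₗ[K] (K ⊗[F] L) →ₗ[K] (K ⊗[F] L) := LieModule.toEnd K (K ⊗[F] L) (K ⊗[F] L)
  have h : B.compr₂ (S.baseChange K) = B.compl₂ (S.baseChange K) + B.comp (S.baseChange K) := by
    refine bilin_ext_of_iSup_eq_top htop htop fun a x hx b y hy => ?_
    have hxy := hS _ _ (lie_mem_maxGenEigenspace_add _ hx hy)
    change S.baseChange K ⁅x, y⁆ = ⁅x, S.baseChange K y⁆ + ⁅S.baseChange K x, y⁆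
    rw [hxy, hS a x hx, hS b y hy, smul_lie, lie_smul, add_smul, add_comm]
  have hxy : (1 : K) ⊗ₜ[F] S ⁅x, y⁆ = 1 ⊗ₜ (⁅x, S y⁆ + ⁅S x, y⁆) := by
    simpa [B, tmul_add] using LinearMap.congr_fun₂ h (1 ⊗ₜ x) (1 ⊗ₜ y)
  exact Module.Flat.tensorProduct_mk_injective (R := F) (M := L) K hxy

theorem exists_derivation_isSemisimple_isNilpotent_sub [PerfectField F] [FiniteDimensional F L]
    (D : LieDerivation F L L) :
    ∃ (S : LieDerivation F L L) (q : F[X]), S.toLinearMap = aeval D.toLinearMap q ∧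
      Module.End.IsSemisimple S.toLinearMap ∧ IsNilpotent (D - S).toLinearMap := by
  obtain ⟨n, -, s, hs, hn, hss, hD⟩ :=
    Module.End.exists_isNilpotent_isSemisimple (f := D.toLinearMap)
  obtain ⟨q, rfl⟩ := Algebra.adjoin_singleton_eq_range_aeval F D.toLinearMap ▸ hs
  change Module.End.IsSemisimple (aeval D.toLinearMap q) at hss
  change D.toLinearMap = n + aeval D.toLinearMap q at hD
  let K := AlgebraicClosure F
  let DK : Module.End K (K ⊗[F] L) := D.toLinearMap.baseChange K
  let SK : Module.End K (K ⊗[F] L) := (aeval D.toLinearMap q).baseChange K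
  have hcomm : Commute DK SK := by
    have : Commute D.toLinearMap (aeval D.toLinearMap q) := by
      simpa using (Commute.all X q).map (aeval D.toLinearMap)
    exact this.map (Module.End.baseChangeHom F K L)
  have hnil : IsNilpotent (DK - SK) := by
    have : DK - SK = Module.End.baseChangeHom F K L n := by
      rw [eq_sub_of_add_eq hD.symm, map_sub]
      rfl
    exact this ▸ hn.map _
  have hss' : Module.End.IsFinitelySemisimple SK :=
    (isSemisimple_baseChange K hss).isFinitelySemisimple
  have leibniz := apply_lie_of_baseChange_apply_eq_smul (K := K) D (aeval D.toLinearMap q)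
    (Module.End.iSup_maxGenEigenspace_eq_top _) fun a x hx =>
      Module.End.apply_eq_of_mem_of_comm_of_isFinitelySemisimple_of_isNil hx hcomm hss' hnil
  refine ⟨⟨aeval D.toLinearMap q, fun x y => ?_⟩, q, rfl, hss, ?_⟩
  · rw [leibniz, ← lie_skew y, sub_neg_eq_add]
  · rwa [LieDerivation.coe_sub_linearMap, sub_eq_of_eq_add hD]

end JordanChevalley

section Arithmetic

theorem eq_zero_of_infinite_prod_sub_zpow_eq_one {K ι : Type*} [Field K] [Fintype ι] {c : ι → K}
    (hc : Function.Injective c) {m : ι → ℤ} (h : {t | ∏ i, (t - c i) ^ m i = 1}.Infinite) :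
    m = 0 := by
  -- Compare the roots of the products formed by the positive and by the negative exponents.
  let p (e : ι → ℤ) : K[X] := ∏ i, (X - C (c i)) ^ (e i).toNat
  have hroot (e : ι → ℤ) (i : ι) : (p e).eval (c i) = 0 ↔ 0 < e i := by
    simp [p, eval_prod, Finset.prod_eq_zero_iff, sub_eq_zero, hc.eq_iff]
  have hp : p m = p (-m) := by
    refine eq_of_infinite_eval_eq _ _ ((h.sdiff (Set.finite_range c)).mono ?_)
    rintro t ⟨ht, htc⟩
    have ht0 (i : ι) : t - c i ≠ 0 := fun h0 => htc ⟨i, (sub_eq_zero.1 h0).symm⟩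
    have hquot : (p m).eval t / (p (-m)).eval t = ∏ i, (t - c i) ^ m i := by
      simp only [p, eval_prod, eval_pow, eval_sub, eval_X, eval_C, ← Finset.prod_div_distrib]
      refine Finset.prod_congr rfl fun i _ => ?_
      rw [← zpow_natCast, ← zpow_natCast, ← zpow_sub₀ (ht0 i), Pi.neg_apply,
        Int.toNat_sub_toNat_neg]
    exact eq_of_div_eq_one (hquot.trans ht)
  funext i
  have := hroot m i
  rw [hp, hroot, Pi.neg_apply] at this
  rw [Pi.zero_apply]
  omega

theorem exists_ne_zero_prod_zpow_ne_one {F K : Type*} [Field F] [Infinite F] [Field K]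
    [Algebra F K] [FiniteDimensional F K] [Algebra.IsSeparable F K] {m : Gal(K/F) → ℤ}
    (hm : m ≠ 0) : ∃ k : K, k ≠ 0 ∧ ∏ σ, σ k ^ m σ ≠ 1 := by
  by_contra! hc
  -- It suffices to consider `k = t - θ` with `t ∈ F` and `θ` a primitive element.
  let pb := Field.powerBasisOfFiniteOfSeparable F K
  have hinj : Function.Injective fun σ : Gal(K/F) => σ pb.gen := fun σ τ h =>
    AlgEquiv.coe_toAlgHom_injective (pb.algHom_ext h)
  refine hm (eq_zero_of_infinite_prod_sub_zpow_eq_one hinj ?_)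
  refine ((Set.infinite_range_of_injective (algebraMap F K).injective).sdiff
    (Set.finite_singleton pb.gen)).mono ?_
  rintro _ ⟨⟨t, rfl⟩, ht⟩
  simpa using hc (algebraMap F K t - pb.gen) (sub_ne_zero.2 ht)

theorem exists_int_valued_add_ne_zero {V : Type*} [AddCommGroup V] [IsAddTorsionFree V]
    {Λ : Submodule ℤ V} (hΛ : Λ.FG) {a : V} (ha : a ∈ Λ) (hne : a ≠ 0) :
    ∃ g : V → ℤ, (∀ x ∈ Λ, ∀ y ∈ Λ, g (x + y) = g x + g y) ∧ g a ≠ 0 := by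
  classical
  have : Module.Finite ℤ Λ := Module.Finite.iff_fg.2 hΛ
  obtain ⟨g, hg⟩ := Module.Projective.exists_dual_ne_zero ℤ
    (show (⟨a, ha⟩ : Λ) ≠ 0 by simpa using hne)
  refine ⟨fun x => if hx : x ∈ Λ then g ⟨x, hx⟩ else 0, fun x hx y hy => ?_, ?_⟩
  · simp only [dif_pos hx, dif_pos hy, dif_pos (add_mem hx hy)]
    exact g.map_add ⟨x, hx⟩ ⟨y, hy⟩
  · simpa [ha] using hg

variable {F K : Type*} [Field F] [Field K] [Algebra F K]

theorem exists_equivariant_map_add_eq_mul [CharZero F] [FiniteDimensional F K] (R : Finset K)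
    {a₀ : K} (ha₀ : a₀ ∈ R) (hne : a₀ ≠ 0) :
    ∃ h : K → K, (∀ (σ : Gal(K/F)) x, h (σ x) = σ (h x)) ∧ h 0 = 1 ∧ (∀ x, h x ≠ 0) ∧
      (∀ a ∈ R, ∀ b ∈ R, h (a + b) = h a * h b) ∧ h a₀ ≠ 1 := by
  have : CharZero K := Algebra.charZero_of_charZero F K
  let Λ : Submodule ℤ K := Submodule.span ℤ (Set.range fun p : Gal(K/F) × R => p.1 p.2)
  have hΛ (σ : Gal(K/F)) {a : K} (ha : a ∈ R) : σ a ∈ Λ :=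
    Submodule.subset_span ⟨(σ, ⟨a, ha⟩), rfl⟩
  obtain ⟨g, hadd, hg⟩ :=
    exists_int_valued_add_ne_zero (Submodule.fg_span (Set.finite_range _)) (hΛ 1 ha₀) hne
  have hg0 : g 0 = 0 := by simpa using hadd 0 (zero_mem Λ) 0 (zero_mem Λ)
  obtain ⟨k, hk, hprod⟩ := exists_ne_zero_prod_zpow_ne_one (m := fun σ : Gal(K/F) => g (σ⁻¹ a₀))
    fun h0 => hg (congrFun h0 1)
  have hσk (σ : Gal(K/F)) : σ k ≠ 0 := (map_ne_zero σ).2 hk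
  refine ⟨fun x => ∏ σ : Gal(K/F), σ k ^ g (σ⁻¹ x), fun τ x => ?_, by simp [hg0],
    fun x => Finset.prod_ne_zero_iff.2 fun σ _ => zpow_ne_zero _ (hσk σ),
    fun a ha b hb => ?_, hprod⟩
  · simp only [map_prod, map_zpow₀]
    exact (Fintype.prod_equiv (Equiv.mulLeft τ) _ _ fun σ => by
      simp [mul_inv_rev, AlgEquiv.mul_apply]).symm
  · simp only [map_add, hadd _ (hΛ _ ha) _ (hΛ _ hb), zpow_add₀ (hσk _), Finset.prod_mul_distrib]

-- Interpolating on a Galois-stable set of nodes makes the interpolant Galois invariant.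
theorem exists_polynomial_aeval_eq_of_equivariant [FiniteDimensional F K] [IsGalois F K]
    {h : K → K} (hh : ∀ (σ : Gal(K/F)) x, h (σ x) = σ (h x)) (s : Finset K) :
    ∃ P : F[X], ∀ x ∈ s, aeval x P = h x := by
  classical
  let T : Finset K := Finset.univ.biUnion fun σ : Gal(K/F) => s.image σ
  have hinj : Set.InjOn (id : K → K) T := Function.injective_id.injOn
  have hT (σ : Gal(K/F)) {x : K} (hx : x ∈ T) : σ x ∈ T := by
    obtain ⟨τ, -, y, hy, rfl⟩ : ∃ τ ∈ (Finset.univ : Finset Gal(K/F)), ∃ y ∈ s, τ y = x := by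
      simpa [T] using hx
    exact Finset.mem_biUnion.2 ⟨σ * τ, Finset.mem_univ _, Finset.mem_image.2 ⟨y, hy, rfl⟩⟩
  let Q : K[X] := Lagrange.interpolate T id h
  have hQ {x : K} (hx : x ∈ T) : Q.eval x = h x := Lagrange.eval_interpolate_at_node h hinj hx
  have hfixed (σ : Gal(K/F)) : Q.map (σ : K →+* K) = Q := by
    refine Lagrange.eq_interpolate_of_eval_eq h hinj
      (degree_map_le.trans_lt (Lagrange.degree_interpolate_lt h hinj)) fun x hx => ?_
    obtain ⟨y, rfl⟩ := σ.surjective x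
    have hy : y ∈ T := by simpa using hT σ⁻¹ hx
    rw [hh, ← hQ hy]
    exact eval_map_apply (f := (σ : K →+* K)) y
  obtain ⟨P, hP⟩ : Q ∈ lifts (algebraMap F K) := by
    refine (lifts_iff_coeff_lifts Q).2 fun n => ?_
    refine (IsGalois.mem_range_algebraMap_iff_fixed _).2 fun σ => ?_
    simpa using congrArg (coeff · n) (hfixed σ)
  refine ⟨P, fun x hx => ?_⟩
  have hPQ : P.map (algebraMap F K) = Q := hP
  rw [← eval_map_algebraMap, hPQ, hQ (Finset.mem_biUnion.2 ⟨1, by simpa using hx⟩)]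

theorem exists_polynomial_aeval_add_eq_mul_of_finite [CharZero F] [FiniteDimensional F K]
    [IsGalois F K] (R : Finset K) {a₀ : K} (ha₀ : a₀ ∈ R) (hne : a₀ ≠ 0) :
    ∃ P : F[X], P.coeff 0 = 1 ∧ (∀ a ∈ R, aeval a P ≠ 0) ∧
      (∀ a ∈ R, ∀ b ∈ R, aeval (a + b) P = aeval a P * aeval b P) ∧ aeval a₀ P ≠ 1 := by
  classical
  obtain ⟨h, hh, h0, hh0, hadd, h1⟩ := exists_equivariant_map_add_eq_mul (F := F) R ha₀ hne
  obtain ⟨P, hP⟩ := exists_polynomial_aeval_eq_of_equivariant hh (insert 0 (R ∪ (R + R)))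
  have hPR {a : K} (ha : a ∈ R) : aeval a P = h a := hP a (by simp [ha])
  have hP0 : algebraMap F K (P.coeff 0) = 1 := by
    rw [← h0, ← hP 0 (by simp), coeff_zero_eq_aeval_zero']
  refine ⟨P, ?_, fun a ha => hPR ha ▸ hh0 a, fun a ha b hb => ?_, hPR ha₀ ▸ h1⟩
  · simpa using hP0
  · rw [hPR ha, hPR hb, ← hadd a ha b hb]
    exact hP _ (by simp [Finset.add_mem_add ha hb])

theorem exists_polynomial_aeval_add_eq_mul [CharZero F] [IsGalois F K]
    (R : Finset K) {a₀ : K} (ha₀ : a₀ ∈ R) (hne : a₀ ≠ 0) :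
    ∃ P : F[X], P.coeff 0 = 1 ∧ (∀ a ∈ R, aeval a P ≠ 0) ∧
      (∀ a ∈ R, ∀ b ∈ R, aeval (a + b) P = aeval a P * aeval b P) ∧ aeval a₀ P ≠ 1 := by
  let E := FiniteGaloisIntermediateField.adjoin F (R : Set K)
  have hinj : Function.Injective (algebraMap E K) := (algebraMap E K).injective
  have hE {a : K} (ha : a ∈ R) : ∃ b : E, algebraMap E K b = a :=
    ⟨⟨a, FiniteGaloisIntermediateField.subset_adjoin F _ ha⟩, rfl⟩
  obtain ⟨b₀, rfl⟩ := hE ha₀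
  obtain ⟨P, hP0, hP1, hadd, hb₀⟩ := exists_polynomial_aeval_add_eq_mul_of_finite (F := F)
    (R.preimage (algebraMap E K) hinj.injOn) (Finset.mem_preimage.2 ha₀)
    (fun h => hne (by rw [h, map_zero]))
  refine ⟨P, hP0, fun a ha => ?_, fun a ha b hb => ?_, ?_⟩
  · obtain ⟨a, rfl⟩ := hE ha
    rw [aeval_algebraMap_apply]
    exact (_root_.map_ne_zero _).2 (hP1 a (Finset.mem_preimage.2 ha))
  · obtain ⟨a, rfl⟩ := hE ha
    obtain ⟨b, rfl⟩ := hE hb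
    rw [← map_add, aeval_algebraMap_apply, aeval_algebraMap_apply, aeval_algebraMap_apply,
      hadd a (Finset.mem_preimage.2 ha) b (Finset.mem_preimage.2 hb), map_mul]
  · rwa [aeval_algebraMap_apply, ne_eq, map_eq_one_iff _ hinj]

end Arithmetic

section Automorphism

theorem aeval_lie_of_eval_add_eq_mul {K M : Type*} [CommRing K] [LieRing M] [LieAlgebra K M]
    (D : LieDerivation K M M) (htop : ⨆ a, Module.End.eigenspace D.toLinearMap a = ⊤) {P : K[X]}
    (hP : ∀ a b, Module.End.HasEigenvalue D.toLinearMap a →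
      Module.End.HasEigenvalue D.toLinearMap b → P.eval (a + b) = P.eval a * P.eval b) (x y : M) :
    aeval D.toLinearMap P ⁅x, y⁆ = ⁅aeval D.toLinearMap P x, aeval D.toLinearMap P y⁆ := by
  let p : Module.End K M := aeval D.toLinearMap P
  let B : M →ₗ[K] M →ₗ[K] M := LieModule.toEnd K M M
  have h : B.compr₂ p = (B.comp p).compl₂ p := by
    refine bilin_ext_of_iSup_eq_top htop htop fun a x hx b y hy => ?_
    rcases eq_or_ne x 0 with rfl | hx0
    · simp
    rcases eq_or_ne y 0 with rfl | hy0
    · simp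
    have hab := hP a b (Module.End.hasEigenvalue_of_hasEigenvector ⟨hx, hx0⟩)
      (Module.End.hasEigenvalue_of_hasEigenvector ⟨hy, hy0⟩)
    rw [Module.End.mem_eigenspace_iff] at hx hy
    have hxy : D.toLinearMap ⁅x, y⁆ = (a + b) • ⁅x, y⁆ := by
      rw [LieDerivation.coeFn_coe] at hx hy ⊢
      rw [D.apply_lie_eq_add, hx, hy, smul_lie, lie_smul, add_smul, add_comm]
    change aeval D.toLinearMap P ⁅x, y⁆ = ⁅aeval D.toLinearMap P x, aeval D.toLinearMap P y⁆
    rw [Module.End.aeval_apply_of_mem_apply_eq_smul hx,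
      Module.End.aeval_apply_of_mem_apply_eq_smul hy,
      Module.End.aeval_apply_of_mem_apply_eq_smul hxy, hab, smul_lie, lie_smul, mul_smul]
  exact LinearMap.congr_fun₂ h x y

variable {F L : Type*} [Field F] [LieRing L] [LieAlgebra F L] [FiniteDimensional F L]

theorem aeval_lie_of_isSemisimple [PerfectField F] (K : Type*) [Field K] [Algebra F K]
    [IsAlgClosed K] {S : LieDerivation F L L} (hS : Module.End.IsSemisimple S.toLinearMap)
    {P : F[X]}
    (hP : ∀ a b : K, aeval a (minpoly F S.toLinearMap) = 0 →
      aeval b (minpoly F S.toLinearMap) = 0 → aeval (a + b) P = aeval a P * aeval b P) (x y : L) :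
    aeval S.toLinearMap P ⁅x, y⁆ = ⁅aeval S.toLinearMap P x, aeval S.toLinearMap P y⁆ := by
  have hlie := aeval_lie_of_eval_add_eq_mul (baseChangeDerivation K S)
    (P := P.map (algebraMap F K)) (isSemisimple_baseChange K hS).iSup_eigenspace_eq_top
    (fun a b ha hb => by
      simpa only [eval_map_algebraMap] using
        hP a b (aeval_minpoly_eq_zero_of_hasEigenvalue_baseChange ha)
          (aeval_minpoly_eq_zero_of_hasEigenvalue_baseChange hb)) (1 ⊗ₜ x) (1 ⊗ₜ y)
  change aeval (S.toLinearMap.baseChange K) _ _ =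
    ⁅aeval (S.toLinearMap.baseChange K) _ _, aeval (S.toLinearMap.baseChange K) _ _⁆ at hlie
  refine Module.Flat.tensorProduct_mk_injective (R := F) (M := L) K ?_
  simpa only [← baseChange_aeval, LieAlgebra.ExtendScalars.bracket_tmul, one_mul,
    LinearMap.baseChange_tmul, TensorProduct.mk_apply] using hlie

theorem exists_lieEquiv_eq_aeval_of_isSemisimple [CharZero F] {S : LieDerivation F L L}
    (hS : Module.End.IsSemisimple S.toLinearMap) {W : Submodule F L}
    (hW : W ∈ Module.End.invtSubmodule S.toLinearMap) (hne : ∃ w ∈ W, S w ≠ 0) :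
    ∃ (P : F[X]) (φ : L ≃ₗ⁅F⁆ L), P.coeff 0 = 1 ∧ (∀ x, φ x = aeval S.toLinearMap P x) ∧
      ∃ w ∈ W, φ w ≠ w := by
  let K := AlgebraicClosure F
  let μ : F[X] := minpoly F S.toLinearMap
  have hμ : μ ≠ 0 := minpoly.ne_zero (Algebra.IsIntegral.isIntegral _)
  have memR {a : K} : a ∈ (μ.rootSet K).toFinset ↔ aeval a μ = 0 := by
    rw [Set.mem_toFinset, mem_rootSet_of_ne hμ]
  obtain ⟨a₀, ha₀, hroot⟩ :
      ∃ a : K, a ≠ 0 ∧ aeval a (minpoly F (LinearMap.restrict S.toLinearMap hW)) = 0 := by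
    refine exists_ne_zero_aeval_minpoly_eq_zero K (hS.restrict hW) fun h => ?_
    obtain ⟨w, hw, hSw⟩ := hne
    exact hSw (congrArg Subtype.val (LinearMap.congr_fun h ⟨w, hw⟩))
  obtain ⟨P, hP0, hP1, hadd, hPa₀⟩ := exists_polynomial_aeval_add_eq_mul (F := F) _
    (memR.2 (aeval_eq_zero_of_dvd_aeval_eq_zero (minpoly_restrict_dvd hW) hroot)) ha₀
  have hlie := aeval_lie_of_isSemisimple K hS fun a b ha hb => hadd a (memR.2 ha) b (memR.2 hb)
  have hcop : IsCoprime μ P := (isCoprime_iff_aeval_ne_zero_of_isAlgClosed F K μ P).2 fun a =>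
    or_iff_not_imp_left.2 fun ha => hP1 a (memR.2 (not_not.1 ha))
  let φ : L ≃ₗ⁅F⁆ L := LieEquiv.ofBijective
    { aeval S.toLinearMap P with map_lie' := fun {x y} => hlie x y }
    ((Module.End.isUnit_iff _).1 (isUnit_aeval_of_isCoprime_minpoly hcop))
  refine ⟨P, φ, hP0, fun _ => rfl, ?_⟩
  by_contra! hφ
  have hdvd : minpoly F (LinearMap.restrict S.toLinearMap hW) ∣ P - 1 := by
    refine minpoly.dvd F _ (LinearMap.ext fun w => Subtype.ext ?_)
    have hw : aeval S.toLinearMap P w = w := hφ w w.2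
    simp [aeval_restrict_apply, hw]
  have := aeval_eq_zero_of_dvd_aeval_eq_zero hdvd hroot
  exact hPa₀ (sub_eq_zero.1 (by simpa using this))

end Automorphism

section NilpotentAutomorphism

variable {F L : Type*} [Field F] [CharZero F] [LieRing L] [LieAlgebra F L]

theorem exists_lieEquiv_eq_aeval_of_isNilpotent {N : LieDerivation F L L}
    (hN : IsNilpotent N.toLinearMap) {W : Submodule F L}
    (hW : W ∈ Module.End.invtSubmodule N.toLinearMap) (hne : ∃ w ∈ W, N w ≠ 0) :
    ∃ (P : F[X]) (φ : L ≃ₗ⁅F⁆ L), P.coeff 0 = 1 ∧ (∀ x, φ x = aeval N.toLinearMap P x) ∧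
      ∃ w ∈ W, φ w ≠ w := by
  -- `LieDerivation.exp` requires a `LieAlgebra ℚ L` instance.
  let _ : Module ℚ L := Module.compHom L (algebraMap ℚ F)
  have : IsScalarTower ℚ F L := ⟨fun q c x => by
    rw [Algebra.smul_def, mul_smul]; rfl⟩
  let _ : LieAlgebra ℚ L := { lie_smul := fun q x y => lie_smul (algebraMap ℚ F q) x y }
  obtain ⟨k, hk⟩ := id hN
  let P : F[X] := ∑ i ∈ Finset.range (k + 2), C (algebraMap ℚ F (i.factorial : ℚ)⁻¹) * X ^ i
  have hφ (x : L) : LieDerivation.exp N hN x = aeval N.toLinearMap P x := by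
    have hk2 : N.toLinearMap ^ (k + 2) = 0 := pow_eq_zero_of_le (by omega) hk
    rw [LieDerivation.exp_map_apply, IsNilpotent.exp_eq_sum hk2]
    simp only [P, map_sum, map_mul, map_pow, aeval_C, aeval_X, LinearMap.sum_apply]
    rfl
  refine ⟨P, LieDerivation.exp N hN, ?_, hφ, ?_⟩
  · simp [P, Finset.sum_range_succ']
  · obtain ⟨w, hw, hNw, hNNw⟩ := exists_mem_apply_ne_zero_apply_apply_eq_zero hN hW hne
    refine ⟨w, hw, fun h => hNw ?_⟩
    have hP : aeval N.toLinearMap P w = w + N w := by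
      have hpow (i : ℕ) : (N.toLinearMap ^ (i + 1 + 1)) w = 0 := by
        rw [pow_succ, pow_succ, Module.End.mul_apply, Module.End.mul_apply, hNNw, map_zero]
      simp only [P, Finset.sum_range_succ', map_add, map_sum, map_mul, map_pow, aeval_C, aeval_X,
        LinearMap.add_apply, LinearMap.sum_apply, Module.End.mul_apply, hpow, map_zero]
      simp [add_comm]
    rwa [hφ, hP, add_eq_left] at h

end NilpotentAutomorphism

section LocalAutomorphism

variable {R L : Type*} [CommRing R] [LieRing L] [LieAlgebra R L]

theorem lie_mem_lowerCentralSeries_one (x y : L) : ⁅x, y⁆ ∈ LieModule.lowerCentralSeries R L L 1 :=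
  LieSubmodule.lie_mem_lie (LieSubmodule.mem_top x) (LieSubmodule.mem_top y)

theorem lowerCentralSeries_one_le_iff {Q : Submodule R L} :
    (LieModule.lowerCentralSeries R L L 1).toSubmodule ≤ Q ↔ ∀ x y : L, ⁅x, y⁆ ∈ Q := by
  refine ⟨fun h x y => h (lie_mem_lowerCentralSeries_one x y), fun h => ?_⟩
  rw [LieModule.lowerCentralSeries_succ, LieSubmodule.lieIdeal_oper_eq_linear_span',
    Submodule.span_le]
  rintro _ ⟨x, -, y, -, rfl⟩
  exact h x y

theorem lowerCentralSeries_one_mem_invtSubmodule (D : LieDerivation R L L) :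
    (LieModule.lowerCentralSeries R L L 1).toSubmodule ∈
      Module.End.invtSubmodule D.toLinearMap := by
  refine lowerCentralSeries_one_le_iff.2 fun x y => ?_
  rw [Submodule.mem_comap, LieDerivation.coeFn_coe, D.apply_lie_eq_add]
  exact add_mem (lie_mem_lowerCentralSeries_one _ _) (lie_mem_lowerCentralSeries_one _ _)

theorem lie_eq_zero_of_mem_center {z : L} (hz : z ∈ LieAlgebra.center R L) (x : L) :
    ⁅z, x⁆ = 0 := by
  rw [← lie_skew, (LieModule.mem_maxTrivSubmodule R L L z).1 hz, neg_zero]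

/-- The transvection `x ↦ x + f x • z` along a central element `z`, as an automorphism of the Lie
algebra; `f` has to kill `z` for invertibility and all brackets for multiplicativity. -/
def centralTransvection (f : Module.Dual R L) (z : L)
    (hf : ∀ x y : L, f ⁅x, y⁆ = 0) (hz : z ∈ LieAlgebra.center R L) (hfz : f z = 0) :
    L ≃ₗ⁅R⁆ L :=
  { LinearEquiv.transvection hfz with
    map_lie' := fun {x y} => by
      have hz' := (LieModule.mem_maxTrivSubmodule R L L z).1 hz
      simp [LinearMap.transvection.apply, hf, hz', lie_eq_zero_of_mem_center hz] }

theorem exists_lieEquiv_apply_eq_add {F L : Type*} [Field F] [LieRing L] [LieAlgebra F L]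
    {x z : L} (hx : x ∉ LieModule.lowerCentralSeries F L L 1)
    (hz : z ∈ LieModule.lowerCentralSeries F L L 1) (hzc : z ∈ LieAlgebra.center F L) :
    ∃ φ : L ≃ₗ⁅F⁆ L, φ x = x + z := by
  obtain ⟨f, hfx, hf⟩ := Submodule.exists_le_ker_of_notMem
    (p := (LieModule.lowerCentralSeries F L L 1).toSubmodule) hx
  have hf0 {w : L} (hw : w ∈ LieModule.lowerCentralSeries F L L 1) : f w = 0 := hf hw
  refine ⟨centralTransvection ((f x)⁻¹ • f) z (fun x y => ?_) hzc ?_, ?_⟩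
  · simp [hf0 (lie_mem_lowerCentralSeries_one x y)]
  · simp [hf0 hz]
  · change x + ((f x)⁻¹ • f x) • z = x + z
    rw [smul_eq_mul, inv_mul_cancel₀ hfx, one_smul]

theorem apply_eq_of_map_lie_of_sub_mem_center {T : L →ₗ[R] L}
    (hT : ∀ x y : L, T ⁅x, y⁆ = ⁅T x, T y⁆) (hc : ∀ x, T x - x ∈ LieAlgebra.center R L) {w : L}
    (hw : w ∈ LieModule.lowerCentralSeries R L L 1) : T w = w := by
  have hle : (LieModule.lowerCentralSeries R L L 1).toSubmodule ≤
      LinearMap.eqLocus T LinearMap.id := by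
    refine lowerCentralSeries_one_le_iff.2 fun x y => ?_
    have hx : ⁅T x, T y⁆ = ⁅x, T y⁆ := by
      rw [← sub_eq_zero, ← sub_lie, lie_eq_zero_of_mem_center (hc x)]
    have hy : ⁅x, T y⁆ = ⁅x, y⁆ := by
      rw [← sub_eq_zero, ← lie_sub, (LieModule.mem_maxTrivSubmodule R L L _).1 (hc y)]
    exact (hT x y).trans (hx.trans hy)
  exact hle hw

theorem exists_local_automorphism_not_automorphism {F L : Type*} [Field F] [LieRing L]
    [LieAlgebra F L] (φ : L ≃ₗ⁅F⁆ L)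
    (hφ : ∀ w ∈ LieModule.lowerCentralSeries F L L 1, φ w - w ∈ LieAlgebra.center F L)
    (hne : ∃ w ∈ LieModule.lowerCentralSeries F L L 1, φ w ≠ w) :
    ∃ T : L →ₗ[F] L, (∀ x : L, ∃ φ : L ≃ₗ⁅F⁆ L, T x = φ x) ∧
      ¬ (Function.Bijective T ∧ ∀ x y : L, T ⁅x, y⁆ = ⁅T x, T y⁆) := by
  let W : Submodule F L := (LieModule.lowerCentralSeries F L L 1).toSubmodule
  obtain ⟨π, hπ⟩ := W.subtype.exists_leftInverse_of_injective W.ker_subtype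
  let T : L →ₗ[F] L := LinearMap.id + ((φ : L →ₗ[F] L) - LinearMap.id) ∘ₗ W.subtype ∘ₗ π
  have hTsub (x : L) : T x - x = φ (π x) - π x := add_sub_cancel_left _ _
  have hTc (x : L) : T x - x ∈ LieAlgebra.center F L := hTsub x ▸ hφ _ (π x).2
  have hTW {w : L} (hw : w ∈ W) : T w = φ w := by
    have hπw : (π w : L) = w := congrArg Subtype.val (LinearMap.congr_fun hπ ⟨w, hw⟩)
    rw [← sub_left_inj, hTsub, hπw]
  refine ⟨T, fun x => ?_, fun ⟨_, hT⟩ => ?_⟩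
  · by_cases hx : x ∈ W
    · exact ⟨φ, hTW hx⟩
    · have hz : T x - x ∈ LieModule.lowerCentralSeries F L L 1 := hTsub x ▸
        sub_mem (LieIdeal.map_lowerCentralSeries_le 1
          (LieIdeal.mem_map (f := (φ : L →ₗ⁅F⁆ L)) (π x).2)) (π x).2
      obtain ⟨ψ, hψ⟩ := exists_lieEquiv_apply_eq_add hx hz (hTc x)
      exact ⟨ψ, by rw [hψ, add_sub_cancel]⟩
  · obtain ⟨w, hw, hne⟩ := hne
    exact hne ((hTW hw).symm.trans (apply_eq_of_map_lie_of_sub_mem_center hT hTc hw))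

end LocalAutomorphism

theorem exists_local_automorphism_not_automorphism_of_eq_aeval {F L : Type*} [Field F] [LieRing L]
    [LieAlgebra F L] (D : LieDerivation F L L)
    (hD : ∀ x ∈ LieModule.lowerCentralSeries F L L 1, D x ∈ LieAlgebra.center F L)
    {P : F[X]} (hP : P.coeff 0 = 1) {φ : L ≃ₗ⁅F⁆ L} (hφ : ∀ x, φ x = aeval D.toLinearMap P x)
    (hne : ∃ w ∈ LieModule.lowerCentralSeries F L L 1, φ w ≠ w) :
    ∃ T : L →ₗ[F] L, (∀ x : L, ∃ φ : L ≃ₗ⁅F⁆ L, T x = φ x) ∧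
      ¬ (Function.Bijective T ∧ ∀ x y : L, T ⁅x, y⁆ = ⁅T x, T y⁆) := by
  refine exists_local_automorphism_not_automorphism φ (fun w hw => ?_) hne
  have := aeval_sub_coeff_zero_smul_mem (center_mem_invtSubmodule D) P (hD w hw)
  rwa [hP, one_smul, ← hφ] at this

theorem stmt_15_general {F L : Type*} [Field F] [CharZero F] [LieRing L] [LieAlgebra F L]
    [Module.Finite F L] (D : LieDerivation F L L)
    (hD : ∀ x ∈ LieModule.lowerCentralSeries F L L 1, D x ∈ LieAlgebra.center F L)
    (hD' : ∃ x ∈ LieModule.lowerCentralSeries F L L 1, D x ≠ 0) :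
    ∃ T : L →ₗ[F] L, (∀ x : L, ∃ φ : L ≃ₗ⁅F⁆ L, T x = φ x) ∧
      ¬ (Function.Bijective T ∧ ∀ x y : L, T ⁅x, y⁆ = ⁅T x, T y⁆) := by
  obtain ⟨S, q, hSq, hss, hnil⟩ := exists_derivation_isSemisimple_isNilpotent_sub D
  have hS : ∀ x ∈ LieModule.lowerCentralSeries F L L 1, S x ∈ LieAlgebra.center F L := by
    intro x hx
    have hq : IsNilpotent (D.toLinearMap - aeval D.toLinearMap q) := by
      rwa [← hSq, ← LieDerivation.coe_sub_linearMap]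
    have := aeval_mem_of_isNilpotent_sub_aeval (center_mem_invtSubmodule D) hq (hD x hx)
    rwa [← hSq] at this
  by_cases hS0 : ∃ x ∈ LieModule.lowerCentralSeries F L L 1, S x ≠ 0
  · obtain ⟨P, φ, hP, hφ, hne⟩ := exists_lieEquiv_eq_aeval_of_isSemisimple hss
      (lowerCentralSeries_one_mem_invtSubmodule S) hS0
    exact exists_local_automorphism_not_automorphism_of_eq_aeval S hS hP hφ hne
  · push Not at hS0
    have hN : ∃ x ∈ LieModule.lowerCentralSeries F L L 1, (D - S) x ≠ 0 := by
      obtain ⟨x, hx, hDx⟩ := hD'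
      exact ⟨x, hx, by simpa [hS0 x hx] using hDx⟩
    obtain ⟨P, φ, hP, hφ, hne⟩ := exists_lieEquiv_eq_aeval_of_isNilpotent hnil
      (lowerCentralSeries_one_mem_invtSubmodule (D - S)) hN
    exact exists_local_automorphism_not_automorphism_of_eq_aeval (D - S)
      (fun x hx => sub_mem (hD x hx) (hS x hx)) hP hφ hne

/-- If a finite-dimensional nilpotent Lie algebra `n` of nilindex `p ≥ 4` over a
field of characteristic zero admits a derivation `D` with `D(n²) ⊆ Z(n)` not
vanishing identically on `n²`, then `n` admits a local automorphism which is not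
an automorphism. -/
theorem stmt_15 (F : Type*) [Field F] [CharZero F]
    (L : Type*) [LieRing L] [LieAlgebra F L] [Module.Finite F L]
    (p : ℕ) (hp : 4 ≤ p)
    (hnil : LieModule.lowerCentralSeries F L L (p - 1) = ⊥)
    (hnil' : LieModule.lowerCentralSeries F L L (p - 2) ≠ ⊥)
    (D : LieDerivation F L L)
    (hD : ∀ x ∈ LieModule.lowerCentralSeries F L L 1, D x ∈ LieAlgebra.center F L)
    (hD' : ∃ x ∈ LieModule.lowerCentralSeries F L L 1, D x ≠ 0) :
    ∃ T : L →ₗ[F] L,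
      (∀ x : L, ∃ φ : L ≃ₗ⁅F⁆ L, T x = φ x) ∧
      ¬ (Function.Bijective T ∧ ∀ x y : L, T ⁅x, y⁆ = ⁅T x, T y⁆) :=
  stmt_15_general D hD hD'
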